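/- Let n ≥ 2, let L be an n×n real symmetric positive semidefinite matrix satisfying L·𝟏 = 0, with eigenvalues 0 = λ₁ ≤ λ₂ ≤ … ≤ λₙ, and let δ ∈ ℝ be such that s = max{|1 − δλ₂|, |1 − δλₙ|} < 1. Then for every x ∈ ℝⁿ with xᵀ L x > 0, writing x' = (I − δL)x, one has x'ᵀ L x' < xᵀ L x; that is, the disagreement functional strictly decreases at each update step as long as it is nonzero. -/

import Mathlib

open Matrix

/-!
In the coordinates of an orthonormal eigenbasis the disagreement is the weighted sum of squares
`∑ λᵢ cᵢ²`, and one step multiplies `cᵢ` by `1 - δλᵢ`. Zero eigenvalues do not contribute. Every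
nonzero eigenvalue lies between `λ₂` and `λₙ`, and `t ↦ |1 - δt|` is largest at an endpoint of an
interval, so each contributing coordinate shrinks.
-/

section SpectralDecomposition

variable {ι κ R : Type*} [Fintype ι] [DecidableEq κ]

theorem of_mul_transpose_of_eq_one [NonAssocSemiring R] {v : κ → ι → R}
    (orthonormal : ∀ i j, v i ⬝ᵥ v j = if i = j then (1 : R) else 0) :
    of v * (of v)ᵀ = 1 := by
  ext i j
  exact (orthonormal i j).trans one_apply.symm

theorem eq_transpose_mul_diagonal_mul_of_orthonormal_eigenvectors [Fintype κ] [CommRing R]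
    {L : Matrix κ κ R} {lam : κ → R} {v : κ → κ → R}
    (orthonormal : ∀ i j, v i ⬝ᵥ v j = if i = j then (1 : R) else 0)
    (eigen : ∀ i, L *ᵥ v i = lam i • v i) :
    L = (of v)ᵀ * diagonal lam * of v := by
  have intertwine : L * (of v)ᵀ = (of v)ᵀ * diagonal lam := by
    ext i j
    rw [mul_diagonal, mul_comm]
    exact congrFun (eigen j) i
  rw [← intertwine, Matrix.mul_assoc,
    mul_eq_one_comm.mp (of_mul_transpose_of_eq_one orthonormal), Matrix.mul_one]

theorem dotProduct_transpose_mul_diagonal_mul_mulVec [Fintype κ] [CommSemiring R]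
    (V : Matrix κ ι R) (d : κ → R) (x : ι → R) :
    x ⬝ᵥ (Vᵀ * diagonal d * V) *ᵥ x = ∑ k, d k * (V *ᵥ x) k ^ 2 := by
  rw [← mulVec_mulVec, ← mulVec_mulVec, dotProduct_mulVec, vecMul_transpose]
  simp only [dotProduct, mulVec_diagonal]
  exact Finset.sum_congr rfl fun k _ => by ring

theorem mulVec_one_sub_smul_transpose_mul_diagonal_mul [Fintype κ] [DecidableEq ι]
    [CommRing R] {V : Matrix κ ι R} (hV : V * Vᵀ = 1) (d : κ → R) (δ : R) (x : ι → R) (k : κ) :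
    (V *ᵥ (1 - δ • (Vᵀ * diagonal d * V)) *ᵥ x) k = (1 - δ * d k) * (V *ᵥ x) k := by
  have intertwine : V * (Vᵀ * diagonal d * V) = diagonal d * V := by
    rw [Matrix.mul_assoc, ← Matrix.mul_assoc, hV, Matrix.one_mul]
  rw [mulVec_mulVec, Matrix.mul_sub, Matrix.mul_one, Matrix.mul_smul, intertwine, sub_mulVec,
    smul_mulVec, ← mulVec_mulVec, Pi.sub_apply, Pi.smul_apply, mulVec_diagonal, smul_eq_mul]
  ring

end SpectralDecomposition

section OrderedRing

variable {ι R : Type*} [CommRing R] [LinearOrder R] [IsStrictOrderedRing R]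

theorem sum_mul_mul_sq_lt_sum_mul_sq {s : Finset ι} {w r c : ι → R}
    (hw : ∀ i ∈ s, 0 ≤ w i) (hr : ∀ i ∈ s, w i ≠ 0 → |r i| < 1)
    (hpos : 0 < ∑ i ∈ s, w i * c i ^ 2) :
    ∑ i ∈ s, w i * (r i * c i) ^ 2 < ∑ i ∈ s, w i * c i ^ 2 := by
  have shrink : ∀ i ∈ s, w i * c i ^ 2 ≠ 0 → w i * (r i * c i) ^ 2 < w i * c i ^ 2 := by
    intro i hi hne
    have term_pos : 0 < w i * c i ^ 2 := (mul_nonneg (hw i hi) (sq_nonneg _)).lt_of_ne' hne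
    calc w i * (r i * c i) ^ 2 = r i ^ 2 * (w i * c i ^ 2) := by ring
      _ < w i * c i ^ 2 := mul_lt_of_lt_one_left term_pos <|
        (sq_lt_one_iff_abs_lt_one _).mpr (hr i hi (left_ne_zero_of_mul hne))
  obtain ⟨j, hj, hne⟩ := Finset.exists_ne_zero_of_sum_ne_zero hpos.ne'
  refine Finset.sum_lt_sum (fun i hi => ?_) ⟨j, hj, shrink j hj hne⟩
  by_cases h : w i * c i ^ 2 = 0
  · refine le_of_eq ?_
    linear_combination (r i ^ 2 - 1) * h
  · exact (shrink i hi h).le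

theorem abs_one_sub_mul_le_max {a b c : R} (hab : a ≤ b) (hbc : b ≤ c) (δ : R) :
    |1 - δ * b| ≤ max |1 - δ * a| |1 - δ * c| := by
  rcases le_total 0 δ with hδ | hδ
  · rw [max_comm]
    exact abs_le_max_abs_abs (sub_le_sub_left (mul_le_mul_of_nonneg_left hbc hδ) 1)
      (sub_le_sub_left (mul_le_mul_of_nonneg_left hab hδ) 1)
  · exact abs_le_max_abs_abs (sub_le_sub_left (mul_le_mul_of_nonpos_left hab hδ) 1)
      (sub_le_sub_left (mul_le_mul_of_nonpos_left hbc hδ) 1)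

theorem abs_one_sub_mul_le_max_of_monotone_of_ne_zero {m : ℕ} {lam : Fin (m + 2) → R}
    (hmono : Monotone lam) (hlam0 : lam 0 = 0) (δ : R) {i : Fin (m + 2)} (hi : lam i ≠ 0) :
    |1 - δ * lam i| ≤ max |1 - δ * lam 1| |1 - δ * lam (Fin.last (m + 1))| := by
  have one_le : 1 ≤ i := Fin.one_le_of_ne_zero (ne_of_apply_ne lam (by rwa [hlam0]))
  exact abs_one_sub_mul_le_max (hmono one_le) (hmono (Fin.le_last i)) δ

theorem disagreement_strict_decrease_general [Fintype ι] [DecidableEq ι]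
    {L : Matrix ι ι R} {lam : ι → R} (hlam : ∀ i, 0 ≤ lam i) {v : ι → ι → R}
    (honb : ∀ i j, v i ⬝ᵥ v j = if i = j then (1 : R) else 0)
    (heig : ∀ i, L *ᵥ v i = lam i • v i)
    {δ : R} (hδ : ∀ i, lam i ≠ 0 → |1 - δ * lam i| < 1)
    {x : ι → R} (hx : 0 < x ⬝ᵥ L *ᵥ x) :
    ((1 - δ • L) *ᵥ x) ⬝ᵥ L *ᵥ ((1 - δ • L) *ᵥ x) < x ⬝ᵥ L *ᵥ x := by
  have orthogonal : of v * (of v)ᵀ = 1 := of_mul_transpose_of_eq_one honb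
  obtain rfl := eq_transpose_mul_diagonal_mul_of_orthonormal_eigenvectors honb heig
  simp only [dotProduct_transpose_mul_diagonal_mul_mulVec,
    mulVec_one_sub_smul_transpose_mul_diagonal_mul orthogonal] at hx ⊢
  exact sum_mul_mul_sq_lt_sum_mul_sq (fun i _ => hlam i) (fun i _ => hδ i) hx

end OrderedRing

/-- If `L` is a real symmetric positive semidefinite `n × n` matrix with `L 𝟏 = 0`
whose eigenvalues (with multiplicity, in increasing order) are
`0 = λ₁ ≤ λ₂ ≤ … ≤ λₙ`, witnessed by an orthonormal family of eigenvectors `v`,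
and `δ` is such that `s = max {|1 - δλ₂|, |1 - δλₙ|} < 1`, then for every `x` with
`xᵀ L x > 0`, writing `x' = (I - δL) x`, one has `x'ᵀ L x' < xᵀ L x`: the
disagreement functional strictly decreases at each update step while nonzero. -/
theorem disagreement_strict_decrease {n : ℕ} (hn : 2 ≤ n)
    (L : Matrix (Fin n) (Fin n) ℝ)
    (hsym : L.IsSymm) (hpsd : L.PosSemidef)
    (hL1 : L.mulVec (fun _ => (1 : ℝ)) = 0)
    (lam : Fin n → ℝ) (hmono : Monotone lam)
    (hlam1 : lam ⟨0, by omega⟩ = 0)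
    (v : Fin n → (Fin n → ℝ))
    (honb : ∀ i j, v i ⬝ᵥ v j = if i = j then (1 : ℝ) else 0)
    (heig : ∀ i, L.mulVec (v i) = lam i • v i)
    (δ : ℝ)
    (hs : max |1 - δ * lam ⟨1, by omega⟩| |1 - δ * lam ⟨n - 1, by omega⟩| < 1)
    (x : Fin n → ℝ) (hx : 0 < x ⬝ᵥ L.mulVec x) :
    (((1 : Matrix (Fin n) (Fin n) ℝ) - δ • L).mulVec x) ⬝ᵥ
        L.mulVec (((1 : Matrix (Fin n) (Fin n) ℝ) - δ • L).mulVec x)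
      < x ⬝ᵥ L.mulVec x := by
  obtain ⟨m, rfl⟩ := Nat.exists_eq_add_of_le' hn
  exact disagreement_strict_decrease_general (fun i => hlam1.ge.trans (hmono (Fin.zero_le i)))
    honb heig (fun _ hi =>
      (abs_one_sub_mul_le_max_of_monotone_of_ne_zero hmono hlam1 δ hi).trans_lt hs) hx
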